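/- There is an absolute constant C such that for every M ≥ 0, every Lipschitz function A : ℝ → ℝ with Lipschitz constant M, and every dyadic interval J ⊆ ℝ, Σ_{I dyadic, I ⊆ J} β(I)² |I| ≤ C · M² · |J|, where β(I) := inf_{a,b ∈ ℝ} sup_{x ∈ 3I} |A(x) − (a + b x)| / |I|. -/

import Mathlib

open MeasureTheory

/-- The dyadic interval `[2^j m, 2^j (m+1))`. -/
noncomputable def dyadicI (j m : ℤ) : Set ℝ :=
  Set.Ico ((2 : ℝ) ^ j * m) ((2 : ℝ) ^ j * (m + 1))

/-- The `n`-th dilated Jones beta number of `A : ℝ → ℝ` on the dyadic interval `[2^j m, 2^j(m+1))`: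
the infimum over affine functions `a + b x` of the supremum of `|A x - (a + b x)|` over the
interval with the same center and `3n` times the length, normalized by the length `2^j`. -/
noncomputable def jonesBeta (n : ℕ) (A : ℝ → ℝ) (j m : ℤ) : ℝ :=
  ⨅ ab : ℝ × ℝ,
    (⨆ x ∈ Set.Icc ((2 : ℝ) ^ j * ((m : ℝ) + 1 / 2) - 3 * n * (2 : ℝ) ^ j / 2)
        ((2 : ℝ) ^ j * ((m : ℝ) + 1 / 2) + 3 * n * (2 : ℝ) ^ j / 2),
      |A x - (ab.1 + ab.2 * x)|) / (2 : ℝ) ^ j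

/-!
The deviation of `A` from its chord over `[a, b]` exceeds the deviations over the two halves by at
most `|D|`, where `D` is the deviation at the midpoint, while replacing the chord by the two
half-chords increases the Dirichlet energy `slope² * length` by exactly `4 * D² / (b - a)`. Hence a
suitable combination of squared deviation and energy is superadditive under bisection with a gain
of `dev² / (b - a)`, and it is at most a multiple of `K² * (b - a)`, so the gains over any bisection
forest telescope.

No shifted dyadic grids are needed to handle the dilates: bisecting the concentric `(2k+1)`-fold
dilate of the dyadic interval with index `m` gives the dilates of the intervals with indices
`2m - k` and `2m + k + 1` one scale below, and these indices have opposite parity. Thus every dilate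
has a single parent, and the dilates form a bisection forest themselves.
-/

section Chord

variable {A : ℝ → ℝ} {a b p q x : ℝ}

/-- The chord of `A` over `[a, b]`: the affine function agreeing with `A` at `a` and `b`. -/
noncomputable def chord (A : ℝ → ℝ) (a b x : ℝ) : ℝ :=
  A a + slope A a b * (x - a)

/-- The maximal deviation of `A` from its chord over `[a, b]`. It has the junk value `0` when the
deviation is unbounded on `[a, b]`. -/
noncomputable def chordDev (A : ℝ → ℝ) (a b : ℝ) : ℝ :=
  ⨆ x : Set.Icc a b, |A x - chord A a b x|

/-- The Dirichlet energy over `[a, b]` of the chord of `A`. -/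
noncomputable def chordEnergy (A : ℝ → ℝ) (a b : ℝ) : ℝ :=
  slope A a b ^ 2 * (b - a)

/-- The potential that increases by at least `chordDev A a b ^ 2 / (b - a)` when `[a, b]` is
bisected. The weights come from writing `d ≤ e + 2 / 3 * d'`, with normalized squared deviations
`d`, `d'` and energy gain `e`, as `d + (2 * d) ≤ 3 * e + 2 * d'`. -/
noncomputable def chordPotential (A : ℝ → ℝ) (a b : ℝ) : ℝ :=
  2 * (chordDev A a b ^ 2 / (b - a)) + 3 * chordEnergy A a b

lemma chord_left (A : ℝ → ℝ) (a b : ℝ) : chord A a b a = A a := by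
  simp [chord]

lemma chord_right (A : ℝ → ℝ) (a b : ℝ) : chord A a b b = A b := by
  simpa [chord, mul_comm, add_comm] using sub_smul_slope_vadd A a b

lemma chordDev_nonneg (A : ℝ → ℝ) (a b : ℝ) : 0 ≤ chordDev A a b :=
  Real.iSup_nonneg fun _ => abs_nonneg _

lemma chordPotential_nonneg (hab : a ≤ b) : 0 ≤ chordPotential A a b := by
  have := sub_nonneg.2 hab
  unfold chordPotential chordEnergy
  positivity

lemma abs_sub_chord_le_chordDev (hA : ContinuousOn A (Set.Icc a b)) (hx : x ∈ Set.Icc a b) :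
    |A x - chord A a b x| ≤ chordDev A a b := by
  have hcont : ContinuousOn (fun y => |A y - chord A a b y|) (Set.Icc a b) := by
    unfold chord
    fun_prop
  have hbdd := isCompact_Icc.bddAbove_image hcont
  rw [Set.image_eq_range] at hbdd
  exact le_ciSup hbdd ⟨x, hx⟩

lemma chord_sub_chord_eq (hpq : p ≠ q) :
    chord A p q x - chord A a b x =
      (q - x) / (q - p) * (A p - chord A a b p) + (x - p) / (q - p) * (A q - chord A a b q) := by
  have hlen : q - p ≠ 0 := sub_ne_zero.2 hpq.symm
  rw [chord, chord, chord, chord, slope_def_field A p q]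
  field_simp
  ring

lemma abs_sub_chord_le_add_chordDev {δ : ℝ} (hA : ContinuousOn A (Set.Icc p q)) (hpq : p < q)
    (hx : x ∈ Set.Icc p q) (hp : |A p - chord A a b p| ≤ δ) (hq : |A q - chord A a b q| ≤ δ) :
    |A x - chord A a b x| ≤ δ + chordDev A p q := by
  have hlen : 0 < q - p := sub_pos.2 hpq
  have hs : 0 ≤ (q - x) / (q - p) := div_nonneg (sub_nonneg.2 hx.2) hlen.le
  have ht : 0 ≤ (x - p) / (q - p) := div_nonneg (sub_nonneg.2 hx.1) hlen.le
  have hst : (q - x) / (q - p) + (x - p) / (q - p) = 1 := by field_simp; ring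
  have hchord : |chord A p q x - chord A a b x| ≤ δ := by
    rw [chord_sub_chord_eq hpq.ne, ← Real.norm_eq_abs, ← mem_closedBall_zero_iff]
    refine convex_closedBall (0 : ℝ) δ ?_ ?_ hs ht hst
    all_goals simpa
  calc |A x - chord A a b x|
      ≤ |A x - chord A p q x| + |chord A p q x - chord A a b x| := abs_sub_le _ _ _
    _ ≤ chordDev A p q + δ := add_le_add (abs_sub_chord_le_chordDev hA hx) hchord
    _ = δ + chordDev A p q := add_comm _ _

lemma chordDev_le_add_max {c : ℝ} (hA : ContinuousOn A (Set.Icc a b)) (hac : a < c) (hcb : c < b) :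
    chordDev A a b ≤ |A c - chord A a b c| + max (chordDev A a c) (chordDev A c b) := by
  have hδ := abs_nonneg (A c - chord A a b c)
  refine Real.iSup_le (fun ⟨x, hx⟩ => ?_)
    (add_nonneg hδ (le_max_of_le_left (chordDev_nonneg A a c)))
  rcases le_total x c with hxc | hcx
  · have hleft := abs_sub_chord_le_add_chordDev (a := a) (b := b)
      (hA.mono (Set.Icc_subset_Icc_right hcb.le)) hac ⟨hx.1, hxc⟩
      (by simp [chord_left]) le_rfl
    exact hleft.trans (add_le_add_right (le_max_left _ _) _)
  · have hright := abs_sub_chord_le_add_chordDev (a := a) (b := b)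
      (hA.mono (Set.Icc_subset_Icc_left hac.le)) hcb ⟨hcx, hx.2⟩ le_rfl
      (by simp [chord_right])
    exact hright.trans (add_le_add_right (le_max_right _ _) _)

lemma chordEnergy_add_chordEnergy_sub (A : ℝ → ℝ) {a b c : ℝ} (hac : a < c) (hcb : c < b) :
    chordEnergy A a c + chordEnergy A c b - chordEnergy A a b =
      (A c - chord A a b c) ^ 2 * (b - a) / ((c - a) * (b - c)) := by
  have hca : c - a ≠ 0 := (sub_pos.2 hac).ne'
  have hbc : b - c ≠ 0 := (sub_pos.2 hcb).ne'
  have hba : b - a ≠ 0 := (sub_pos.2 (hac.trans hcb)).ne'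
  simp only [chordEnergy, chord, slope_def_field]
  field_simp
  ring

lemma chordDev_sq_le (hA : ContinuousOn A (Set.Icc a b)) {c : ℝ} (hac : a < c) (hcb : c < b) :
    chordDev A a b ^ 2 ≤
      4 * (A c - chord A a b c) ^ 2 + 4 / 3 * (chordDev A a c ^ 2 + chordDev A c b ^ 2) := by
  have hdev := chordDev_le_add_max hA hac hcb
  have hdev₀ := chordDev_nonneg A a b
  set D := A c - chord A a b c
  set s₁ := chordDev A a c
  set s₂ := chordDev A c b
  have hmax : max s₁ s₂ ^ 2 ≤ s₁ ^ 2 + s₂ ^ 2 := by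
    rcases max_choice s₁ s₂ with h | h <;> rw [h] <;> nlinarith only [sq_nonneg s₁, sq_nonneg s₂]
  calc chordDev A a b ^ 2 ≤ (|D| + max s₁ s₂) ^ 2 := by gcongr
    _ ≤ 4 * |D| ^ 2 + 4 / 3 * max s₁ s₂ ^ 2 := by
      nlinarith only [sq_nonneg (3 * |D| - max s₁ s₂)]
    _ ≤ 4 * D ^ 2 + 4 / 3 * (s₁ ^ 2 + s₂ ^ 2) := by rw [sq_abs]; gcongr

lemma chordDev_sq_div_add_chordPotential_le (hab : a < b) (hA : ContinuousOn A (Set.Icc a b)) :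
    chordDev A a b ^ 2 / (b - a) + chordPotential A a b ≤
      chordPotential A a ((a + b) / 2) + chordPotential A ((a + b) / 2) b := by
  have hlen : 0 < b - a := sub_pos.2 hab
  have hac := left_lt_add_div_two.2 hab
  have hcb := add_div_two_lt_right.2 hab
  have henergy := chordEnergy_add_chordEnergy_sub A hac hcb
  have hdev := div_le_div_of_nonneg_right (chordDev_sq_le hA hac hcb) hlen.le
  simp only [chordPotential]
  set c := (a + b) / 2 with hc
  have hca : c - a = (b - a) / 2 := by rw [hc]; ring
  have hbc : b - c = (b - a) / 2 := by rw [hc]; ring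
  rw [hca, hbc] at henergy ⊢
  set L := b - a
  have hgain : 4 * (A c - chord A a b c) ^ 2 / L =
      chordEnergy A a c + chordEnergy A c b - chordEnergy A a b := by
    rw [henergy]
    field_simp
    norm_num [mul_comm]
  have hhalves : 4 / 3 * (chordDev A a c ^ 2 + chordDev A c b ^ 2) / L =
      2 / 3 * (chordDev A a c ^ 2 / (L / 2) + chordDev A c b ^ 2 / (L / 2)) := by
    field_simp
    ring
  rw [add_div, hgain, hhalves] at hdev
  linarith only [hdev]

end Chord

section Lipschitz

variable {A : ℝ → ℝ} {K : NNReal} {a b : ℝ}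

lemma abs_slope_le_of_lipschitzWith (hA : LipschitzWith K A) (a b : ℝ) : |slope A a b| ≤ K := by
  rw [slope_def_field, abs_div]
  exact div_le_of_le_mul₀ (abs_nonneg _) K.2 (hA.dist_le_mul b a)

lemma chordDev_le_of_lipschitzWith (hA : LipschitzWith K A) (hab : a ≤ b) :
    chordDev A a b ≤ 2 * K * (b - a) := by
  have := sub_nonneg.2 hab
  refine Real.iSup_le (fun ⟨x, hax, hxb⟩ => ?_) (by positivity)
  have hxa : |x - a| ≤ b - a := by
    rw [abs_of_nonneg (sub_nonneg.2 hax)]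
    exact sub_le_sub_right hxb a
  calc |A x - chord A a b x| = |A x - A a - slope A a b * (x - a)| := by
        rw [chord, sub_add_eq_sub_sub]
    _ ≤ |A x - A a| + |slope A a b * (x - a)| := abs_sub _ _
    _ ≤ K * |x - a| + K * |x - a| := by
        rw [abs_mul]
        gcongr
        exacts [hA.dist_le_mul x a, abs_slope_le_of_lipschitzWith hA a b]
    _ ≤ K * (b - a) + K * (b - a) := by gcongr
    _ = 2 * K * (b - a) := by ring

lemma chordPotential_le_of_lipschitzWith (hA : LipschitzWith K A) (hab : a < b) :
    chordPotential A a b ≤ 11 * K ^ 2 * (b - a) := by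
  have hlen : 0 < b - a := sub_pos.2 hab
  have hdev := chordDev_le_of_lipschitzWith hA hab.le
  have hdev₀ := chordDev_nonneg A a b
  have hslope : slope A a b ^ 2 ≤ K ^ 2 :=
    sq_le_sq.2 ((abs_slope_le_of_lipschitzWith hA a b).trans (le_abs_self _))
  calc chordPotential A a b
      ≤ 2 * ((2 * K * (b - a)) ^ 2 / (b - a)) + 3 * (K ^ 2 * (b - a)) := by
        unfold chordPotential chordEnergy
        gcongr
    _ = 11 * K ^ 2 * (b - a) := by field_simp; ring

end Lipschitz

section Packing

/-- The value of the function `Φ` of interval endpoints on the interval concentric with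
`dyadicI j m` and `2 * k + 1` times as long. -/
noncomputable def onDilate (Φ : ℝ → ℝ → ℝ) (k : ℕ) (j m : ℤ) : ℝ :=
  Φ (2 ^ j * (m - k)) (2 ^ j * (m + k + 1))

lemma sum_Ico_two_mul_sub_add_le {g : ℤ → ℝ} (hg : ∀ i, 0 ≤ g i) (k : ℕ) (u v : ℤ) :
    ∑ m ∈ Finset.Ico u v, (g (2 * m - k) + g (2 * m + k + 1)) ≤
      ∑ m ∈ Finset.Ico (2 * u - k) (2 * v + k), g m := by
  have hdisj : Disjoint ((Finset.Ico u v).image fun m : ℤ => 2 * m - k)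
      ((Finset.Ico u v).image fun m : ℤ => 2 * m + k + 1) := by
    simp only [Finset.disjoint_left, Finset.mem_image]
    rintro _ ⟨m, -, rfl⟩ ⟨m', -, h⟩
    omega
  have hinj_left : Function.Injective fun m : ℤ => 2 * m - k := fun m m' h => by
    dsimp only at h
    omega
  have hinj_right : Function.Injective fun m : ℤ => 2 * m + k + 1 := fun m m' h => by
    dsimp only at h
    omega
  rw [Finset.sum_add_distrib, ← Finset.sum_image (f := g) hinj_left.injOn,
    ← Finset.sum_image (f := g) hinj_right.injOn, ← Finset.sum_union hdisj]
  refine Finset.sum_le_sum_of_subset_of_nonneg (fun i hi => ?_) fun i _ _ => hg i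
  simp only [Finset.mem_union, Finset.mem_image, Finset.mem_Ico] at hi ⊢
  rcases hi with ⟨m, hm, rfl⟩ | ⟨m, hm, rfl⟩ <;> omega

/-- The indices of the dyadic intervals `n` scales below `dyadicI j m` whose concentric
`(2 * k + 1)`-fold dilates lie in that of `dyadicI j m`. -/
noncomputable def dilateIndices (k : ℕ) (m : ℤ) (n : ℕ) : Finset ℤ :=
  Finset.Ico (2 ^ n * (m - k) + k) (2 ^ n * (m + k + 1) - k)

lemma Ico_subset_dilateIndices (k : ℕ) (m : ℤ) (n : ℕ) :
    Finset.Ico (2 ^ n * m) (2 ^ n * (m + 1)) ⊆ dilateIndices k m n := by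
  have hk : (k : ℤ) ≤ 2 ^ n * k := le_mul_of_one_le_left k.cast_nonneg (one_le_pow₀ one_le_two)
  exact Finset.Ico_subset_Ico (by linarith only [hk]) (by linarith only [hk])

lemma card_dilateIndices_le (k : ℕ) (m : ℤ) (n : ℕ) :
    (dilateIndices k m n).card ≤ 2 ^ n * (2 * k + 1) := by
  rw [dilateIndices, Int.card_Ico, Int.toNat_le]
  push_cast
  linarith only [k.cast_nonneg (α := ℤ)]

lemma sum_dilateIndices_le_succ {g : ℤ → ℝ} (hg : ∀ i, 0 ≤ g i) (k : ℕ) (m : ℤ) (n : ℕ) :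
    ∑ i ∈ dilateIndices k m n, (g (2 * i - k) + g (2 * i + k + 1)) ≤
      ∑ i ∈ dilateIndices k m (n + 1), g i := by
  have hsucc : dilateIndices k m (n + 1) =
      Finset.Ico (2 * (2 ^ n * (m - k) + k) - k) (2 * (2 ^ n * (m + k + 1) - k) + k) := by
    unfold dilateIndices
    congr 1 <;> ring
  rw [hsucc]
  exact sum_Ico_two_mul_sub_add_le hg k _ _

lemma onDilate_sub_one_left (Φ : ℝ → ℝ → ℝ) (k : ℕ) (j m : ℤ) :
    onDilate Φ k (j - 1) (2 * m - k) =
      Φ (2 ^ j * (m - k)) ((2 ^ j * (m - k) + 2 ^ j * (m + k + 1)) / 2) := by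
  unfold onDilate
  rw [zpow_sub_one₀ two_ne_zero]
  congr 1 <;> push_cast <;> ring

lemma onDilate_sub_one_right (Φ : ℝ → ℝ → ℝ) (k : ℕ) (j m : ℤ) :
    onDilate Φ k (j - 1) (2 * m + k + 1) =
      Φ ((2 ^ j * (m - k) + 2 ^ j * (m + k + 1)) / 2) (2 ^ j * (m + k + 1)) := by
  unfold onDilate
  rw [zpow_sub_one₀ two_ne_zero]
  congr 1 <;> push_cast <;> ring

lemma dilate_left_lt_right (k : ℕ) (j m : ℤ) :
    (2 : ℝ) ^ j * (m - k) < 2 ^ j * (m + k + 1) := by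
  gcongr
  linarith only [k.cast_nonneg (α := ℝ)]

variable {φ Ψ : ℝ → ℝ → ℝ}

lemma sum_onDilate_add_le_succ (hΨ : ∀ a b, a < b → 0 ≤ Ψ a b)
    (hstep : ∀ a b, a < b → φ a b + Ψ a b ≤ Ψ a ((a + b) / 2) + Ψ ((a + b) / 2) b)
    (k : ℕ) (j m : ℤ) (n : ℕ) :
    ∑ i ∈ dilateIndices k m n, onDilate φ k j i + ∑ i ∈ dilateIndices k m n, onDilate Ψ k j i ≤
      ∑ i ∈ dilateIndices k m (n + 1), onDilate Ψ k (j - 1) i := by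
  rw [← Finset.sum_add_distrib]
  refine (Finset.sum_le_sum fun i _ => ?_).trans (sum_dilateIndices_le_succ
    (g := onDilate Ψ k (j - 1)) (fun i => hΨ _ _ (dilate_left_lt_right k (j - 1) i)) k m n)
  rw [onDilate_sub_one_left, onDilate_sub_one_right]
  exact hstep _ _ (dilate_left_lt_right k j i)

lemma sum_onDilate_le_of_le_mul {B : ℝ} (hB₀ : 0 ≤ B) (hB : ∀ a b, a < b → Ψ a b ≤ B * (b - a))
    (k : ℕ) (j m : ℤ) (n : ℕ) :
    ∑ i ∈ dilateIndices k m n, onDilate Ψ k (j - n) i ≤ B * (2 * k + 1) ^ 2 * 2 ^ j := by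
  have hterm : ∀ i ∈ dilateIndices k m n,
      onDilate Ψ k (j - n) i ≤ B * (2 ^ (j - n) * (2 * k + 1)) := fun i _ =>
    (hB _ _ (dilate_left_lt_right k (j - n) i)).trans_eq (by ring)
  have hcard : ((dilateIndices k m n).card : ℝ) ≤ 2 ^ n * (2 * k + 1) := by
    exact_mod_cast card_dilateIndices_le k m n
  calc ∑ i ∈ dilateIndices k m n, onDilate Ψ k (j - n) i
      ≤ (dilateIndices k m n).card * (B * (2 ^ (j - n) * (2 * k + 1))) := by
        simpa only [nsmul_eq_mul] using Finset.sum_le_card_nsmul _ _ _ hterm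
    _ ≤ (2 ^ n * (2 * k + 1)) * (B * (2 ^ (j - n) * (2 * k + 1))) := by gcongr
    _ = B * (2 * k + 1) ^ 2 * 2 ^ j := by
        rw [zpow_sub₀ two_ne_zero, zpow_natCast]
        field_simp

lemma sum_sum_onDilate_le (hΨ : ∀ a b, a < b → 0 ≤ Ψ a b)
    (hstep : ∀ a b, a < b → φ a b + Ψ a b ≤ Ψ a ((a + b) / 2) + Ψ ((a + b) / 2) b)
    {B : ℝ} (hB : ∀ a b, a < b → Ψ a b ≤ B * (b - a)) (k : ℕ) (j m : ℤ) (N : ℕ) :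
    ∑ n ∈ Finset.range N, ∑ i ∈ dilateIndices k m n, onDilate φ k (j - n) i ≤
      B * (2 * k + 1) ^ 2 * 2 ^ j := by
  have hB₀ : 0 ≤ B := by simpa using (hΨ 0 1 one_pos).trans (hB 0 1 one_pos)
  set P : ℕ → ℝ := fun n => ∑ i ∈ dilateIndices k m n, onDilate Ψ k (j - n) i
  have hgain (n : ℕ) : ∑ i ∈ dilateIndices k m n, onDilate φ k (j - n) i ≤ P (n + 1) - P n := by
    have hsucc : j - ((n + 1 : ℕ) : ℤ) = j - n - 1 := by push_cast; ring
    simp only [P, hsucc]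
    exact le_sub_right_of_add_le (sum_onDilate_add_le_succ hΨ hstep k (j - n) m n)
  have hP₀ : 0 ≤ P 0 := Finset.sum_nonneg fun i _ => hΨ _ _ (dilate_left_lt_right k _ i)
  calc ∑ n ∈ Finset.range N, ∑ i ∈ dilateIndices k m n, onDilate φ k (j - n) i
      ≤ ∑ n ∈ Finset.range N, (P (n + 1) - P n) := Finset.sum_le_sum fun n _ => hgain n
    _ = P N - P 0 := Finset.sum_range_sub P N
    _ ≤ P N := sub_le_self _ hP₀
    _ ≤ B * (2 * k + 1) ^ 2 * 2 ^ j := sum_onDilate_le_of_le_mul hB₀ hB k j m N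

end Packing

section JonesBeta

variable {A : ℝ → ℝ}

lemma jonesBeta_nonneg (d : ℕ) (A : ℝ → ℝ) (j m : ℤ) : 0 ≤ jonesBeta d A j m :=
  Real.iInf_nonneg fun _ => div_nonneg
    (Real.iSup_nonneg fun _ => Real.iSup_nonneg fun _ => abs_nonneg _) (by positivity)

lemma jonesBeta_le_of_abs_sub_le {d : ℕ} {j m : ℤ} {r s t : ℝ} (ht : 0 ≤ t)
    (hA : ∀ x ∈ Set.Icc ((2 : ℝ) ^ j * ((m : ℝ) + 1 / 2) - 3 * d * (2 : ℝ) ^ j / 2)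
      ((2 : ℝ) ^ j * ((m : ℝ) + 1 / 2) + 3 * d * (2 : ℝ) ^ j / 2), |A x - (r + s * x)| ≤ t) :
    jonesBeta d A j m ≤ t / 2 ^ j := by
  refine (ciInf_le ⟨0, ?_⟩ (r, s)).trans (div_le_div_of_nonneg_right ?_ (by positivity))
  · rintro _ ⟨ab, rfl⟩
    exact div_nonneg
      (Real.iSup_nonneg fun _ => Real.iSup_nonneg fun _ => abs_nonneg _) (by positivity)
  · exact Real.iSup_le (fun x => Real.iSup_le (hA x) ht) ht

lemma jonesBeta_le_onDilate_chordDev (hA : Continuous A) {d k : ℕ} (hk : 3 * d ≤ 2 * k + 1)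
    (j m : ℤ) : jonesBeta d A j m ≤ onDilate (chordDev A) k j m / 2 ^ j := by
  unfold onDilate
  set a : ℝ := 2 ^ j * (m - k) with ha
  set b : ℝ := 2 ^ j * (m + k + 1) with hb
  refine jonesBeta_le_of_abs_sub_le (r := A a - slope A a b * a) (s := slope A a b)
    (chordDev_nonneg A a b) fun x ⟨hx₁, hx₂⟩ => ?_
  have hdilate : (2 : ℝ) ^ j * (3 * d) ≤ 2 ^ j * (2 * k + 1) := by
    gcongr
    exact_mod_cast hk
  have hx : x ∈ Set.Icc a b := ⟨by linarith only [hx₁, hdilate, ha],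
    by linarith only [hx₂, hdilate, hb]⟩
  convert abs_sub_chord_le_chordDev hA.continuousOn hx using 2
  rw [chord]
  ring

lemma jonesBeta_sq_mul_le (hA : Continuous A) {d k : ℕ} (hk : 3 * d ≤ 2 * k + 1) (j m : ℤ) :
    jonesBeta d A j m ^ 2 * 2 ^ j ≤
      (2 * k + 1) * onDilate (fun a b => chordDev A a b ^ 2 / (b - a)) k j m := by
  have hβ₀ := jonesBeta_nonneg d A j m
  have hβ := jonesBeta_le_onDilate_chordDev hA hk j m
  have hlen : (2 : ℝ) ^ j * (m + k + 1) - 2 ^ j * (m - k) = 2 ^ j * (2 * k + 1) := by ring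
  calc jonesBeta d A j m ^ 2 * 2 ^ j
      ≤ (onDilate (chordDev A) k j m / 2 ^ j) ^ 2 * 2 ^ j := by gcongr
    _ = (2 * k + 1) * onDilate (fun a b => chordDev A a b ^ 2 / (b - a)) k j m := by
        simp only [onDilate, hlen]
        field_simp

lemma sum_jonesBeta_sq_mul_le {K : NNReal} (hA : LipschitzWith K A) (d : ℕ) (j m : ℤ) (N : ℕ) :
    ∑ n ∈ Finset.range N, ∑ i ∈ Finset.Ico (2 ^ n * m) (2 ^ n * (m + 1)),
      jonesBeta d A (j - n) i ^ 2 * (2 : ℝ) ^ (j - n) ≤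
        11 * (3 * d + 1) ^ 3 * K ^ 2 * 2 ^ j := by
  obtain ⟨k, hdk, hkd⟩ : ∃ k : ℕ, 3 * d ≤ 2 * k + 1 ∧ 2 * k + 1 ≤ 3 * d + 1 :=
    ⟨3 * d / 2, by omega, by omega⟩
  have hkd' : 2 * (k : ℝ) + 1 ≤ 3 * d + 1 := by exact_mod_cast hkd
  have hpack := sum_sum_onDilate_le (φ := fun a b => chordDev A a b ^ 2 / (b - a))
    (fun _ _ hab => chordPotential_nonneg hab.le)
    (fun _ _ hab => chordDev_sq_div_add_chordPotential_le hab hA.continuous.continuousOn)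
    (fun _ _ hab => chordPotential_le_of_lipschitzWith hA hab) k j m N
  calc ∑ n ∈ Finset.range N, ∑ i ∈ Finset.Ico (2 ^ n * m) (2 ^ n * (m + 1)),
        jonesBeta d A (j - n) i ^ 2 * (2 : ℝ) ^ (j - n)
      ≤ ∑ n ∈ Finset.range N, ∑ i ∈ dilateIndices k m n,
          jonesBeta d A (j - n) i ^ 2 * (2 : ℝ) ^ (j - n) := by
        gcongr with n
        exact Ico_subset_dilateIndices k m n
    _ ≤ ∑ n ∈ Finset.range N, ∑ i ∈ dilateIndices k m n,
          (2 * k + 1) * onDilate (fun a b => chordDev A a b ^ 2 / (b - a)) k (j - n) i := by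
        gcongr ∑ n ∈ _, ∑ i ∈ _, ?_ with n _ i
        exact jonesBeta_sq_mul_le hA.continuous hdk (j - n) i
    _ ≤ (2 * k + 1) * (11 * K ^ 2 * (2 * k + 1) ^ 2 * 2 ^ j) := by
        simp only [← Finset.mul_sum]
        gcongr
    _ = 11 * (2 * k + 1) ^ 3 * K ^ 2 * 2 ^ j := by ring
    _ ≤ 11 * (3 * d + 1) ^ 3 * K ^ 2 * 2 ^ j := by gcongr

end JonesBeta

lemma exists_of_dyadicI_subset {j m j' m' : ℤ} (h : dyadicI j' m' ⊆ dyadicI j m) :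
    ∃ n : ℕ, j' = j - n ∧ m' ∈ Set.Ico (2 ^ n * m) (2 ^ n * (m + 1)) := by
  have hpos : (0 : ℝ) < 2 ^ j' := by positivity
  obtain ⟨hleft, hright⟩ := (Set.Ico_subset_Ico_iff (by gcongr; linarith)).1 h
  have hle : j' ≤ j := by
    rw [← zpow_le_zpow_iff_right₀ (one_lt_two (α := ℝ))]
    linarith only [hleft, hright]
  obtain ⟨n, rfl⟩ := Int.le.dest hle
  rw [zpow_add₀ two_ne_zero, zpow_natCast, mul_assoc, mul_le_mul_iff_right₀ hpos] at hleft hright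
  refine ⟨n, by ring, by exact_mod_cast hleft, ?_⟩
  rw [← Int.add_one_le_iff]
  exact_mod_cast hright

lemma tsum_dyadicI_subset_le (f : ℤ × ℤ → ENNReal) (j m : ℤ) :
    ∑' I : {q : ℤ × ℤ // dyadicI q.1 q.2 ⊆ dyadicI j m}, f I ≤
      ∑' n : ℕ, ∑ i ∈ Finset.Ico (2 ^ n * m) (2 ^ n * (m + 1)), f (j - n, i) := by
  set gen : ℕ → Finset (ℤ × ℤ) := fun n => {j - (n : ℤ)} ×ˢ Finset.Ico (2 ^ n * m) (2 ^ n * (m + 1))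
  have hcover : {q : ℤ × ℤ | dyadicI q.1 q.2 ⊆ dyadicI j m} ⊆ ⋃ n, (gen n : Set (ℤ × ℤ)) := by
    rintro ⟨j', m'⟩ h
    obtain ⟨n, rfl, hm'⟩ := exists_of_dyadicI_subset h
    exact Set.mem_iUnion.2 ⟨n, by simpa [gen] using hm'⟩
  calc ∑' I : {q : ℤ × ℤ // dyadicI q.1 q.2 ⊆ dyadicI j m}, f I
      ≤ ∑' I : ⋃ n, (gen n : Set (ℤ × ℤ)), f I := ENNReal.tsum_mono_subtype f hcover
    _ ≤ ∑' n, ∑' I : (gen n : Set (ℤ × ℤ)), f I := ENNReal.tsum_iUnion_le_tsum f _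
    _ = ∑' n : ℕ, ∑ i ∈ Finset.Ico (2 ^ n * m) (2 ^ n * (m + 1)), f (j - n, i) := by
        simp only [Finset.tsum_subtype', gen, Finset.sum_product, Finset.sum_singleton]

theorem stmt13_general {A : ℝ → ℝ} {K : NNReal} (hA : LipschitzWith K A) (d : ℕ) (jJ mJ : ℤ) :
    ∑' I : {q : ℤ × ℤ // dyadicI q.1 q.2 ⊆ dyadicI jJ mJ},
        ENNReal.ofReal (jonesBeta d A I.1.1 I.1.2 ^ 2 * (2 : ℝ) ^ I.1.1) ≤
      ENNReal.ofReal (11 * (3 * d + 1) ^ 3 * K ^ 2 * (2 : ℝ) ^ jJ) := by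
  refine (tsum_dyadicI_subset_le
    (fun q => ENNReal.ofReal (jonesBeta d A q.1 q.2 ^ 2 * (2 : ℝ) ^ q.1)) jJ mJ).trans ?_
  refine ENNReal.tsum_le_of_sum_range_le fun N => ?_
  have hterm (n : ℕ) (i : ℤ) : 0 ≤ jonesBeta d A (jJ - n) i ^ 2 * (2 : ℝ) ^ (jJ - n) := by
    positivity
  simp only [← ENNReal.ofReal_sum_of_nonneg fun i _ => hterm _ i]
  rw [← ENNReal.ofReal_sum_of_nonneg fun n _ => Finset.sum_nonneg fun i _ => hterm n i]
  exact ENNReal.ofReal_le_ofReal (sum_jonesBeta_sq_mul_le hA d jJ mJ N)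

/-- Carleson packing condition for Jones' beta numbers of a Lipschitz function. -/
theorem stmt13 : ∃ C : ℝ, 0 < C ∧ ∀ M : ℝ, 0 ≤ M → ∀ A : ℝ → ℝ,
    LipschitzWith (Real.toNNReal M) A → ∀ jJ mJ : ℤ,
    ∑' I : {q : ℤ × ℤ // dyadicI q.1 q.2 ⊆ dyadicI jJ mJ},
        ENNReal.ofReal (jonesBeta 1 A I.1.1 I.1.2 ^ 2 * (2 : ℝ) ^ I.1.1) ≤
      ENNReal.ofReal (C * M ^ 2 * (2 : ℝ) ^ jJ) := by
  refine ⟨11 * (3 * 1 + 1) ^ 3, by norm_num, fun M hM A hA jJ mJ => ?_⟩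
  simpa only [Real.coe_toNNReal M hM, Nat.cast_one] using stmt13_general hA 1 jJ mJ
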